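/- Let C₀ > 0 and let M be a positive integer. There exists a constant C > 0 such that for all real a, x, T > 0 with T ≤ x/3, every (a,x,T,C₀,M)-admissible test function φ, and every r ≥ max(a/x, 1), one has |φ̌(r)| ≤ C·min(r^{−3/2}, r^{−5/2}·x/T). -/

import Mathlib

open Real

/-- The modified Bessel function of imaginary order:
`K_{iν}(x) = ∫_0^∞ exp(−x cosh t) cos(νt) dt`. -/
noncomputable def KBessel (ν x : ℝ) : ℝ :=
  ∫ t in Set.Ioi (0:ℝ), Real.exp (-x * Real.cosh t) * Real.cos (ν * t)

/-- `f` is piecewise monotone on at most `M` subintervals of `[0,∞)`: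
there are points `0 = a 0 ≤ a 1 ≤ … ≤ a (M−1)` such that `f` is monotone or antitone
on each `[a i, a (i+1)]` for `i + 1 < M`, and on the final ray `[a (M−1), ∞)`. -/
def PiecewiseMono (f : ℝ → ℝ) (M : ℕ) : Prop :=
  ∃ a : ℕ → ℝ, a 0 = 0 ∧ Monotone a ∧
    (∀ i : ℕ, i + 1 < M →
      MonotoneOn f (Set.Icc (a i) (a (i + 1))) ∨
        AntitoneOn f (Set.Icc (a i) (a (i + 1)))) ∧
    (MonotoneOn f (Set.Ici (a (M - 1))) ∨ AntitoneOn f (Set.Ici (a (M - 1))))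

/-- An `(a,x,T,C₀,M)`-admissible test function. -/
def IsAdmissible (a x T C₀ : ℝ) (M : ℕ) (φ : ℝ → ℝ) : Prop :=
  ContDiff ℝ (⊤ : ℕ∞) φ ∧
  (∀ t : ℝ, 0 ≤ φ t ∧ φ t ≤ 1) ∧
  (∀ t : ℝ, a / (2 * x) ≤ t → t ≤ a / x → φ t = 1) ∧
  (∀ t : ℝ, t ≤ a / (2 * x + 2 * T) → φ t = 0) ∧
  (∀ t : ℝ, a / (x - T) ≤ t → φ t = 0) ∧
  (∀ t : ℝ, 0 ≤ t → |deriv φ t| ≤ C₀ * x ^ 2 / (a * T)) ∧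
  PiecewiseMono φ M ∧ PiecewiseMono (deriv φ) M

/-- The `K`-Bessel transform `φ̌(r) = cosh(πr) ∫_0^∞ K_{2ir}(u) φ(u) du/u`. -/
noncomputable def phiCheck (φ : ℝ → ℝ) (r : ℝ) : ℝ :=
  Real.cosh (Real.pi * r) * ∫ u in Set.Ioi (0:ℝ), KBessel (2 * r) u * φ u / u

/-!
Let `K = K_{iν}` with `ν = 2r`. The energy `u² K'² + (ν² - u²) K²` is decreasing in `u`, and its
limit at `0` is `‖Γ(1 - iν)‖² = πν / sinh (πν)`, because `ν K - i u K'` is, up to a factor of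
modulus `1`, a Mellin integral which tends to `Γ(1 - iν)`. Hence `cosh (πr) |K(u)| ≪ r^{-1/2}` and
`cosh (πr) |u K'(u)| ≪ r^{1/2}` on the support of the test function, where `u ≤ 3r/2` stays away
from the turning point `u = ν`.

The Bessel equation reads `K / u = -(u K')' / (ν² - u²)`, so integrating `K φ / u` by parts once or
twice gains `r⁻²` at the cost of one or two derivatives of `φ`. The bounds above then reduce the
theorem to the total variations of `φ` and `φ'`, which piecewise monotonicity controls by `2M` times
their supremum.
-/

open MeasureTheory Set Filter Topology Asymptotics

/-! ### Laplace integrals in `cosh` -/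

lemma self_le_cosh (t : ℝ) : t ≤ cosh t := by
  rcases le_total t 0 with ht | ht
  · exact ht.trans (cosh_pos t).le
  · exact (self_le_sinh_iff.2 ht).trans (sinh_lt_cosh t).le

lemma tendsto_cosh_atTop : Tendsto cosh atTop atTop :=
  tendsto_atTop_mono self_le_cosh tendsto_id

lemma abs_sinh_le_cosh (t : ℝ) : |sinh t| ≤ cosh t := by
  rw [abs_sinh, ← cosh_abs]
  exact (sinh_lt_cosh _).le

/-- Continuous functions growing at most like a power of `cosh` at `+∞`: the weights `g` for which
`∫ t in Ioi 0, g t * exp (-u * cosh t)` converges for every `u > 0`. -/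
def CoshModerate (g : ℝ → ℝ) : Prop :=
  Continuous g ∧ ∃ k : ℕ, g =O[atTop] fun t => cosh t ^ k

namespace CoshModerate

lemma of_abs_le_cosh_pow {g : ℝ → ℝ} (hg : Continuous g) (k : ℕ) (hk : ∀ t, |g t| ≤ cosh t ^ k) :
    CoshModerate g :=
  ⟨hg, k, .of_bound 1 (.of_forall fun t => by
    rw [norm_eq_abs, one_mul]; exact (hk t).trans (le_abs_self _))⟩

lemma cos_mul (ν : ℝ) : CoshModerate fun t => cos (ν * t) :=
  of_abs_le_cosh_pow (by fun_prop) 0 fun t => by simpa using abs_cos_le_one (ν * t)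

lemma sin_mul (ν : ℝ) : CoshModerate fun t => sin (ν * t) :=
  of_abs_le_cosh_pow (by fun_prop) 0 fun t => by simpa using abs_sin_le_one (ν * t)

lemma cosh_pow (k : ℕ) : CoshModerate fun t => cosh t ^ k :=
  of_abs_le_cosh_pow (by fun_prop) k fun t => (abs_of_pos (pow_pos (cosh_pos t) k)).le

lemma sinh : CoshModerate Real.sinh :=
  of_abs_le_cosh_pow (by fun_prop) 1 fun t => by simpa using abs_sinh_le_cosh t

variable {f g : ℝ → ℝ}

lemma mul (hf : CoshModerate f) (hg : CoshModerate g) : CoshModerate fun t => f t * g t := by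
  obtain ⟨hfc, k, hk⟩ := hf
  obtain ⟨hgc, l, hl⟩ := hg
  exact ⟨hfc.mul hgc, k + l, by simpa only [pow_add] using hk.mul hl⟩

lemma const_mul (c : ℝ) (hf : CoshModerate f) : CoshModerate fun t => c * f t :=
  ⟨hf.1.const_mul c, hf.2.imp fun _ hk => hk.const_mul_left c⟩

lemma add (hf : CoshModerate f) (hg : CoshModerate g) : CoshModerate fun t => f t + g t := by
  obtain ⟨hfc, k, hk⟩ := hf
  obtain ⟨hgc, l, hl⟩ := hg
  have cosh_pow_mono {i j : ℕ} (hij : i ≤ j) :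
      (fun t => cosh t ^ i) =O[atTop] fun t => cosh t ^ j :=
    .of_norm_le fun t => by
      rw [norm_eq_abs, abs_of_pos (pow_pos (cosh_pos t) i)]
      exact pow_le_pow_right₀ (one_le_cosh t) hij
  exact ⟨hfc.add hgc, max k l, (hk.trans (cosh_pow_mono (le_max_left k l))).add
    (hl.trans (cosh_pow_mono (le_max_right k l)))⟩

variable {u : ℝ}

lemma mul_exp_neg_mul_cosh_isBigO (hg : CoshModerate g) (hu : 0 < u) :
    (fun t => g t * exp (-u * cosh t)) =O[atTop] fun t => exp (-(u / 2) * t) := by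
  obtain ⟨-, k, hk⟩ := hg
  have pow_isBigO : (fun t => cosh t ^ k) =O[atTop] fun t => exp (u / 2 * cosh t) :=
    ((isLittleO_pow_exp_pos_mul_atTop k (half_pos hu)).comp_tendsto tendsto_cosh_atTop).isBigO
  refine ((hk.trans pow_isBigO).mul (isBigO_refl _ _)).trans (.of_norm_le fun t => ?_)
  rw [← exp_add, norm_of_nonneg (exp_pos _).le, exp_le_exp]
  linarith [mul_le_mul_of_nonneg_left (self_le_cosh t) (half_pos hu).le]

lemma integrableOn (hg : CoshModerate g) (hu : 0 < u) :
    IntegrableOn (fun t => g t * exp (-u * cosh t)) (Ioi 0) :=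
  integrable_of_isBigO_exp_neg (half_pos hu)
    (hg.1.mul (by fun_prop)).continuousOn (hg.mul_exp_neg_mul_cosh_isBigO hu)

lemma tendsto_mul_exp_neg_mul_cosh (hg : CoshModerate g) (hu : 0 < u) :
    Tendsto (fun t => g t * exp (-u * cosh t)) atTop (𝓝 0) :=
  (hg.mul_exp_neg_mul_cosh_isBigO hu).trans_tendsto
    (tendsto_exp_atBot.comp (tendsto_id.const_mul_atTop_of_neg (by linarith)))

end CoshModerate

/-- The transform `u ↦ ∫_0^∞ g(t) exp(-u cosh t) dt`. The function `K_{iν}`, its derivatives and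
the companion integral with `sin (ν t) sinh t` are all of this form. -/
noncomputable def coshLaplace (g : ℝ → ℝ) (u : ℝ) : ℝ :=
  ∫ t in Ioi 0, g t * exp (-u * cosh t)

section coshLaplace

variable {f g : ℝ → ℝ} {u : ℝ}

lemma coshLaplace_const_mul (c : ℝ) (g : ℝ → ℝ) (u : ℝ) :
    coshLaplace (fun t => c * g t) u = c * coshLaplace g u := by
  simp only [coshLaplace, mul_assoc, integral_const_mul]

lemma coshLaplace_add (hf : CoshModerate f) (hg : CoshModerate g) (hu : 0 < u) :
    coshLaplace (fun t => f t + g t) u = coshLaplace f u + coshLaplace g u := by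
  simp only [coshLaplace, add_mul]
  exact integral_add (hf.integrableOn hu) (hg.integrableOn hu)

lemma hasDerivAt_coshLaplace (hg : CoshModerate g) (hu : 0 < u) :
    HasDerivAt (coshLaplace g) (-coshLaplace (fun t => g t * cosh t) u) u := by
  have hgc := hg.1
  have hgcosh : CoshModerate fun t => g t * cosh t := by
    simpa only [pow_one] using hg.mul (.cosh_pow 1)
  have deriv_integral := (hasDerivAt_integral_of_dominated_loc_of_deriv_le
    (μ := volume.restrict (Ioi (0 : ℝ)))
    (F := fun v t => g t * exp (-v * cosh t))
    (F' := fun v t => -(g t * cosh t * exp (-v * cosh t)))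
    (bound := fun t => ‖g t * cosh t * exp (-(u / 2) * cosh t)‖)
    (Ioi_mem_nhds (half_lt_self hu))
    (.of_forall fun v => (by fun_prop : Continuous _).aestronglyMeasurable)
    (hg.integrableOn hu) (by fun_prop : Continuous _).aestronglyMeasurable
    (.of_forall fun t v (hv : u / 2 < v) => ?_)
    (hgcosh.integrableOn (half_pos hu)).norm
    (.of_forall fun t v _ => ?_)).2
  · rwa [integral_neg] at deriv_integral
  · rw [norm_neg, norm_mul, norm_mul (g t * cosh t), norm_of_nonneg (exp_pos _).le,
      norm_of_nonneg (exp_pos _).le]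
    gcongr
  · have exponent : HasDerivAt (fun v : ℝ => -v * cosh t) (-1 * cosh t) v :=
      (hasDerivAt_id v).neg.mul_const _
    exact (exponent.exp.const_mul (g t)).congr_deriv (by ring)

lemma coshLaplace_deriv {h h' : ℝ → ℝ} (hd : ∀ t, HasDerivAt h (h' t) t) (hh : CoshModerate h)
    (hh' : CoshModerate h') (hu : 0 < u) :
    coshLaplace h' u = u * coshLaplace (fun t => sinh t * h t) u - h 0 * exp (-u) := by
  have hsinh : CoshModerate fun t => -u * (sinh t * h t) :=
    (CoshModerate.sinh.mul hh).const_mul (-u)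
  have ftc := integral_Ioi_of_hasDerivAt_of_tendsto' (a := 0)
    (f := fun t => h t * exp (-u * cosh t))
    (f' := fun t => (h' t + -u * (sinh t * h t)) * exp (-u * cosh t))
    (fun t _ => ?_) ((hh'.add hsinh).integrableOn hu) (hh.tendsto_mul_exp_neg_mul_cosh hu)
  · change coshLaplace (fun t => h' t + -u * (sinh t * h t)) u = _ at ftc
    rw [coshLaplace_add hh' hsinh hu, coshLaplace_const_mul, cosh_zero, mul_one] at ftc
    linarith
  · exact ((hd t).mul ((hasDerivAt_cosh t).const_mul (-u)).exp).congr_deriv (by ring)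

end coshLaplace

/-! ### The Bessel function `K_{iν}` -/

/-- `(-1)^k` times the `k`-th derivative of `KBessel ν`: differentiating under the integral sign
brings down `k` factors `cosh t`. -/
noncomputable def besselMoment (ν : ℝ) (k : ℕ) : ℝ → ℝ :=
  coshLaplace fun t => cos (ν * t) * cosh t ^ k

/-- The companion `∫_0^∞ sin(νt) sinh(t) exp(-u cosh t) dt` of `besselMoment ν 1`: together they are
the real and imaginary parts of `∫_0^∞ cosh((1 - iν)t) exp(-u cosh t) dt`. -/
noncomputable def sinhMoment (ν : ℝ) : ℝ → ℝ :=
  coshLaplace fun t => sin (ν * t) * sinh t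

section besselMoment

variable (ν : ℝ) {u : ℝ}

lemma KBessel_eq_besselMoment_zero (u : ℝ) : KBessel ν u = besselMoment ν 0 u := by
  simp only [KBessel, besselMoment, coshLaplace, pow_zero, mul_one, mul_comm (exp _)]

lemma coshModerate_cos_mul_cosh_pow (k : ℕ) : CoshModerate fun t => cos (ν * t) * cosh t ^ k :=
  (CoshModerate.cos_mul ν).mul (.cosh_pow k)

lemma coshModerate_sin_mul_sinh : CoshModerate fun t => sin (ν * t) * sinh t :=
  (CoshModerate.sin_mul ν).mul .sinh

lemma hasDerivAt_besselMoment (k : ℕ) (hu : 0 < u) :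
    HasDerivAt (besselMoment ν k) (-besselMoment ν (k + 1) u) u := by
  simpa only [besselMoment, pow_succ, mul_assoc] using
    hasDerivAt_coshLaplace (coshModerate_cos_mul_cosh_pow ν k) hu

lemma mul_sinhMoment (hu : 0 < u) : u * sinhMoment ν u = ν * besselMoment ν 0 u := by
  have deriv_sin (t : ℝ) : HasDerivAt (fun t => sin (ν * t)) (ν * (cos (ν * t) * cosh t ^ 0)) t :=
    (((hasDerivAt_id t).const_mul ν).sin).congr_deriv (by simp [mul_comm])
  have parts := coshLaplace_deriv deriv_sin (.sin_mul ν)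
    ((coshModerate_cos_mul_cosh_pow ν 0).const_mul ν) hu
  simp only [coshLaplace_const_mul, mul_zero, sin_zero, zero_mul, sub_zero,
    mul_comm (sinh _)] at parts
  exact parts.symm

lemma besselMoment_ode (hu : 0 < u) :
    u ^ 2 * besselMoment ν 2 u - u * besselMoment ν 1 u = (u ^ 2 - ν ^ 2) * besselMoment ν 0 u := by
  have deriv_cos_mul_sinh (t : ℝ) : HasDerivAt (fun t => cos (ν * t) * sinh t)
      (-ν * (sin (ν * t) * sinh t) + cos (ν * t) * cosh t ^ 1) t :=
    ((((hasDerivAt_id t).const_mul ν).cos).mul (hasDerivAt_sinh t)).congr_deriv (by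
      simp only [id, mul_one]; ring)
  have hsin := (coshModerate_sin_mul_sinh ν).const_mul (-ν)
  have hcos := coshModerate_cos_mul_cosh_pow ν
  have parts := coshLaplace_deriv deriv_cos_mul_sinh ((CoshModerate.cos_mul ν).mul .sinh)
    (hsin.add (hcos 1)) hu
  have sinh_sq_split : (fun t => sinh t * (cos (ν * t) * sinh t)) =
      fun t => cos (ν * t) * cosh t ^ 2 + -1 * (cos (ν * t) * cosh t ^ 0) := by
    ext t; rw [cosh_sq]; ring
  rw [sinh_sq_split, coshLaplace_add hsin (hcos 1) hu,
    coshLaplace_add (hcos 2) ((hcos 0).const_mul _) hu, coshLaplace_const_mul,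
    coshLaplace_const_mul, sinh_zero, mul_zero, zero_mul, sub_zero] at parts
  change -ν * sinhMoment ν u + besselMoment ν 1 u =
    u * (besselMoment ν 2 u + -1 * besselMoment ν 0 u) at parts
  linear_combination (-u) * parts - ν * mul_sinhMoment ν hu

end besselMoment

/-! ### Behaviour of `K_{iν}` at the origin -/

lemma integral_eq_integral_Ioi_add_comp_neg {E : Type*} [NormedAddCommGroup E] [NormedSpace ℝ E]
    {f : ℝ → E} (hf : IntegrableOn f (Ioi 0)) (hfneg : IntegrableOn (fun t => f (-t)) (Ioi 0)) :
    ∫ t, f t = ∫ t in Ioi 0, (f t + f (-t)) := by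
  have hfIic : IntegrableOn f (Iic 0) := by
    rw [integrableOn_Iic_iff_integrableOn_Iio]
    simpa using hfneg.comp_neg
  rw [integral_add hf hfneg, integral_comp_neg_Ioi, neg_zero, add_comm,
    intervalIntegral.integral_Iic_add_Ioi hfIic hf]

lemma mellin_eq_integral_comp_exp {E : Type*} [NormedAddCommGroup E] [NormedSpace ℂ E]
    (f : ℝ → E) (z : ℂ) : mellin f z = ∫ t : ℝ, Complex.exp (z * t) • f (exp t) := by
  have subst_exp := integral_image_eq_integral_abs_deriv_smul (s := univ) MeasurableSet.univ
    (fun t _ => (hasDerivAt_exp t).hasDerivWithinAt) exp_injective.injOn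
    fun s : ℝ => (s : ℂ) ^ (z - 1) • f s
  rw [image_univ, range_exp, setIntegral_univ] at subst_exp
  rw [mellin, subst_exp]
  congr 1 with t
  have exp_cpow : (exp t : ℂ) ^ (z - 1) = Complex.exp (t * (z - 1)) := by
    rw [Complex.cpow_def_of_ne_zero (by exact_mod_cast (exp_pos t).ne'),
      ← Complex.ofReal_log (exp_pos t).le, log_exp]
  rw [abs_of_pos (exp_pos t), ← Complex.coe_smul, smul_smul, exp_cpow, Complex.ofReal_exp,
    ← Complex.exp_add]
  ring_nf

lemma tendsto_mellin_exp_neg_sub_div {z : ℂ} (hz : 0 < z.re) :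
    Tendsto (fun δ : ℝ => mellin (fun s : ℝ => (exp (-s - δ / s) : ℂ)) z) (𝓝[≥] 0)
      (𝓝 (Complex.Gamma z)) := by
  rw [Complex.Gamma_eq_integral hz, Complex.GammaIntegral]
  refine tendsto_integral_filter_of_dominated_convergence _ (.of_forall fun δ => ?_) ?_
    (Complex.GammaIntegral_convergent hz).norm ?_
  · refine ContinuousOn.aestronglyMeasurable (fun s (hs : 0 < s) => ?_) measurableSet_Ioi
    have cpow_cont : ContinuousAt (fun s : ℝ => (s : ℂ) ^ (z - 1)) s :=
      Complex.continuousAt_ofReal_cpow_const s _ (.inr hs.ne')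
    have exponent_cont : ContinuousAt (fun s : ℝ => -s - δ / s) s :=
      continuousAt_id.neg.sub (continuousAt_const.div continuousAt_id hs.ne')
    exact (cpow_cont.smul
      (Complex.continuous_ofReal.continuousAt.comp exponent_cont.rexp)).continuousWithinAt
  · filter_upwards [self_mem_nhdsWithin] with δ (hδ : 0 ≤ δ)
    filter_upwards [ae_restrict_mem measurableSet_Ioi] with s (hs : 0 < s)
    rw [smul_eq_mul, mul_comm, norm_mul, norm_mul, Complex.norm_of_nonneg (exp_pos _).le,
      Complex.norm_of_nonneg (exp_pos _).le]
    gcongr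
    exact sub_le_self _ (div_nonneg hδ hs.le)
  · refine .of_forall fun s => Tendsto.mono_left (Continuous.tendsto' ?_ _ _ ?_) nhdsWithin_le_nhds
    · fun_prop
    · simp [mul_comm]

lemma integral_exp_mul_exp_neg_mul_cosh (z : ℂ) {u : ℝ} (hu : 0 < u) :
    ∫ t : ℝ, Complex.exp (z * t) * (exp (-u * cosh t) : ℂ) =
      ((u / 2 : ℝ) : ℂ) ^ (-z) * mellin (fun s : ℝ => (exp (-s - u ^ 2 / 4 / s) : ℂ)) z := by
  rw [← smul_eq_mul (_ ^ _), ← mellin_comp_mul_left _ z (half_pos hu), mellin_eq_integral_comp_exp]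
  congr 1 with t
  rw [smul_eq_mul, cosh_eq, exp_neg]
  congr 3
  field_simp
  ring

lemma integrableOn_exp_mul_exp_neg_mul_cosh {z : ℂ} (hz : z.re ≤ 1) {u : ℝ} (hu : 0 < u) :
    IntegrableOn (fun t : ℝ => Complex.exp (z * t) * (exp (-u * cosh t) : ℂ)) (Ioi 0) := by
  have moderate_exp : CoshModerate exp := by
    simpa only [pow_one, cosh_add_sinh] using (CoshModerate.cosh_pow 1).add .sinh
  refine (moderate_exp.integrableOn hu).mono'
    (by fun_prop : Continuous _).aestronglyMeasurable ?_
  filter_upwards [ae_restrict_mem measurableSet_Ioi] with t (ht : 0 < t)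
  rw [norm_mul, Complex.norm_exp, Complex.norm_of_nonneg (exp_pos _).le, Complex.re_mul_ofReal]
  gcongr
  exact mul_le_of_le_one_left ht.le hz

lemma integral_exp_mul_exp_neg_mul_cosh_eq_moments (ν : ℝ) {u : ℝ} (hu : 0 < u) :
    ∫ t : ℝ, Complex.exp ((1 - Complex.I * ν) * t) * (exp (-u * cosh t) : ℂ) =
      2 * (besselMoment ν 1 u - Complex.I * sinhMoment ν u) := by
  have cosh_split (t : ℝ) :
      (Complex.exp ((1 - Complex.I * ν) * t) + Complex.exp (-((1 - Complex.I * ν) * t))) / 2 =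
        Complex.cos (ν * t) * Complex.cosh t -
          Complex.I * (Complex.sin (ν * t) * Complex.sinh t) := by
    rw [← Complex.cosh, show (1 - Complex.I * ν) * t = (t : ℂ) - (ν * t) * Complex.I by ring,
      Complex.cosh_sub, Complex.cosh_mul_I, Complex.sinh_mul_I]
    ring
  have hcos : IntegrableOn
      (fun t : ℝ => ((cos (ν * t) * cosh t ^ 1 * exp (-u * cosh t) : ℝ) : ℂ)) (Ioi 0) :=
    ((coshModerate_cos_mul_cosh_pow ν 1).integrableOn hu).ofReal
  have hsin : IntegrableOn
      (fun t : ℝ => ((sin (ν * t) * sinh t * exp (-u * cosh t) : ℝ) : ℂ)) (Ioi 0) :=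
    ((coshModerate_sin_mul_sinh ν).integrableOn hu).ofReal
  rw [integral_eq_integral_Ioi_add_comp_neg
    (integrableOn_exp_mul_exp_neg_mul_cosh (by simp) hu) (by
      simpa only [Complex.ofReal_neg, mul_neg, neg_mul, cosh_neg] using
        integrableOn_exp_mul_exp_neg_mul_cosh (z := -(1 - Complex.I * ν)) (by simp) hu)]
  simp only [besselMoment, sinhMoment, coshLaplace]
  rw [← integral_complex_ofReal, ← integral_complex_ofReal, ← integral_const_mul,
    ← integral_sub hcos (hsin.const_mul _), ← integral_const_mul]
  congr 1 with t
  push_cast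
  rw [Complex.cosh_neg, mul_neg]
  linear_combination 2 * Complex.exp (-u * Complex.cosh t) * cosh_split t

lemma sq_norm_Gamma_one_sub_I_mul {ν : ℝ} (hν : ν ≠ 0) :
    ‖Complex.Gamma (1 - Complex.I * ν)‖ ^ 2 = π * ν / sinh (π * ν) := by
  have reflection := Complex.Gamma_mul_Gamma_one_sub (Complex.I * ν)
  have recurrence := Complex.Gamma_add_one (Complex.I * ν) (by simp [hν])
  have conj_Gamma : Complex.Gamma (Complex.I * ν + 1) =
      starRingEnd ℂ (Complex.Gamma (1 - Complex.I * ν)) := by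
    rw [← Complex.Gamma_conj]; simp [add_comm]
  have sin_I : Complex.sin (π * (Complex.I * ν)) = (sinh (π * ν) : ℂ) * Complex.I := by
    rw [show (π * (Complex.I * ν) : ℂ) = (π * ν : ℝ) * Complex.I by push_cast; ring,
      Complex.sin_mul_I, Complex.ofReal_sinh]
  have sinh_ne_zero : (sinh (π * ν) : ℂ) ≠ 0 := by
    exact_mod_cast sinh_ne_zero.2 (mul_ne_zero pi_ne_zero hν)
  have : (‖Complex.Gamma (1 - Complex.I * ν)‖ ^ 2 : ℂ) = π * ν / sinh (π * ν) := by
    rw [← Complex.mul_conj', ← conj_Gamma, recurrence, mul_comm, mul_assoc, reflection, sin_I]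
    field_simp
  exact_mod_cast this

lemma besselMoment_sq_add_sq (ν : ℝ) {u : ℝ} (hu : 0 < u) :
    u ^ 2 * besselMoment ν 1 u ^ 2 + ν ^ 2 * besselMoment ν 0 u ^ 2 =
      ‖mellin (fun s : ℝ => (exp (-s - u ^ 2 / 4 / s) : ℂ)) (1 - Complex.I * ν)‖ ^ 2 := by
  set m := mellin (fun s : ℝ => (exp (-s - u ^ 2 / 4 / s) : ℂ)) (1 - Complex.I * ν)
  have norm_eq := congrArg norm ((integral_exp_mul_exp_neg_mul_cosh _ hu).symm.trans
    (integral_exp_mul_exp_neg_mul_cosh_eq_moments ν hu))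
  rw [norm_mul, norm_mul, Complex.norm_cpow_eq_rpow_re_of_pos (half_pos hu),
    show (-(1 - Complex.I * ν)).re = -1 by simp, rpow_neg_one, Complex.norm_ofNat] at norm_eq
  have norm_m : ‖m‖ = u * ‖(besselMoment ν 1 u - Complex.I * sinhMoment ν u : ℂ)‖ := by
    rw [inv_mul_eq_iff_eq_mul₀ (half_pos hu).ne'] at norm_eq
    linarith
  have sq_norm_moments : ‖(besselMoment ν 1 u - Complex.I * sinhMoment ν u : ℂ)‖ ^ 2 =
      besselMoment ν 1 u ^ 2 + sinhMoment ν u ^ 2 := by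
    rw [← Complex.normSq_eq_norm_sq, ← neg_sq (sinhMoment ν u), ← Complex.normSq_add_mul_I,
      Complex.ofReal_neg, neg_mul, mul_comm _ Complex.I, sub_eq_add_neg]
  rw [norm_m, mul_pow, sq_norm_moments]
  linear_combination (-(ν * besselMoment ν 0 u) - u * sinhMoment ν u) * mul_sinhMoment ν hu

lemma tendsto_besselMoment_sq_add_sq {ν : ℝ} (hν : ν ≠ 0) :
    Tendsto (fun u => u ^ 2 * besselMoment ν 1 u ^ 2 + ν ^ 2 * besselMoment ν 0 u ^ 2) (𝓝[>] 0)
      (𝓝 (π * ν / sinh (π * ν))) := by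
  have quarter_sq : Tendsto (fun u : ℝ => u ^ 2 / 4) (𝓝[>] 0) (𝓝[≥] 0) :=
    tendsto_nhdsWithin_iff.2 ⟨((by fun_prop : Continuous fun u : ℝ => u ^ 2 / 4).tendsto' 0 0
      (by simp)).mono_left nhdsWithin_le_nhds, .of_forall fun u => by
        rw [mem_Ici]; positivity⟩
  rw [← sq_norm_Gamma_one_sub_I_mul hν]
  refine ((((tendsto_mellin_exp_neg_sub_div (by simp)).comp quarter_sq).norm).pow 2).congr' ?_
  filter_upwards [self_mem_nhdsWithin] with u hu
  exact (besselMoment_sq_add_sq ν hu).symm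

/-! ### Energy estimate -/

/-- The Bessel energy `u² K'² + (ν² - u²) K²`, where `K = K_{iν}` and `K' = -besselMoment ν 1`. -/
noncomputable def besselEnergy (ν u : ℝ) : ℝ :=
  u ^ 2 * besselMoment ν 1 u ^ 2 + (ν ^ 2 - u ^ 2) * besselMoment ν 0 u ^ 2

lemma hasDerivAt_besselEnergy (ν : ℝ) {u : ℝ} (hu : 0 < u) :
    HasDerivAt (besselEnergy ν) (-(2 * u * besselMoment ν 0 u ^ 2)) u := by
  have hd := hasDerivAt_besselMoment ν (hu := hu)
  refine (((hasDerivAt_pow 2 u).mul ((hd 1).pow 2)).add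
    (((hasDerivAt_pow 2 u).const_sub (ν ^ 2)).mul ((hd 0).pow 2))).congr_deriv ?_
  simp only [Nat.cast_ofNat, Nat.add_one_sub_one, pow_one, zero_add, Nat.reduceAdd, Pi.pow_apply]
  linear_combination (-2 * besselMoment ν 1 u) * besselMoment_ode ν hu

lemma antitoneOn_besselEnergy (ν : ℝ) : AntitoneOn (besselEnergy ν) (Ioi 0) := by
  refine antitoneOn_of_hasDerivWithinAt_nonpos (convex_Ioi 0)
    (fun u hu => (hasDerivAt_besselEnergy ν hu).continuousAt.continuousWithinAt)
    (fun u hu => (hasDerivAt_besselEnergy ν (interior_subset hu)).hasDerivWithinAt) fun u hu => ?_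
  have : 0 < u := interior_subset hu
  exact neg_nonpos.2 (by positivity)

lemma besselEnergy_le {ν : ℝ} (hν : ν ≠ 0) {u : ℝ} (hu : 0 < u) :
    besselEnergy ν u ≤ π * ν / sinh (π * ν) := by
  refine ge_of_tendsto (tendsto_besselMoment_sq_add_sq hν) ?_
  filter_upwards [Ioo_mem_nhdsGT hu] with v hv
  calc besselEnergy ν u ≤ besselEnergy ν v := antitoneOn_besselEnergy ν hv.1 hu hv.2.le
    _ ≤ v ^ 2 * besselMoment ν 1 v ^ 2 + ν ^ 2 * besselMoment ν 0 v ^ 2 := by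
      unfold besselEnergy
      gcongr
      exact sub_le_self _ (sq_nonneg v)

lemma cosh_sq_mul_besselEnergy_le {r u : ℝ} (hr : 1 ≤ r) (hu : 0 < u) :
    cosh (π * r) ^ 2 * besselEnergy (2 * r) u ≤ 8 * r := by
  have one_le_sinh : 1 ≤ sinh (π * r) :=
    calc 1 ≤ π * r := by nlinarith [pi_gt_three]
      _ ≤ sinh (π * r) := self_le_sinh_iff.2 (by positivity)
  have cosh_le : cosh (π * r) ≤ 2 * sinh (π * r) := by
    nlinarith [cosh_sq (π * r), cosh_pos (π * r)]
  have sinh_double : sinh (π * (2 * r)) = 2 * sinh (π * r) * cosh (π * r) := by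
    rw [← sinh_two_mul]; ring_nf
  calc cosh (π * r) ^ 2 * besselEnergy (2 * r) u
      ≤ cosh (π * r) ^ 2 * (π * (2 * r) / sinh (π * (2 * r))) := by
        gcongr; exact besselEnergy_le (by positivity) hu
    _ = π * r * (cosh (π * r) / sinh (π * r)) := by
        rw [sinh_double]; field_simp
    _ ≤ 4 * r * 2 := by
        gcongr
        · exact pi_le_four
        · exact (div_le_iff₀ (by linarith)).2 cosh_le
    _ = 8 * r := by ring


section

variable {r u : ℝ}

lemma cosh_mul_abs_besselMoment_zero_le (hr : 1 ≤ r) (hu : 0 < u) (hur : u ≤ 3 / 2 * r) :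
    cosh (π * r) * |besselMoment (2 * r) 0 u| ≤ 3 / √r := by
  have hr₀ : 0 < r := by linarith
  have potential_ge : r ^ 2 ≤ (2 * r) ^ 2 - u ^ 2 := by nlinarith
  rw [← abs_of_pos (cosh_pos (π * r)), ← abs_mul]
  refine abs_le_of_sq_le_sq ?_ (by positivity)
  rw [div_pow, sq_sqrt hr₀.le, le_div_iff₀ hr₀]
  refine le_of_mul_le_mul_left ?_ hr₀
  calc r * ((cosh (π * r) * besselMoment (2 * r) 0 u) ^ 2 * r)
      = cosh (π * r) ^ 2 * (r ^ 2 * besselMoment (2 * r) 0 u ^ 2) := by ring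
    _ ≤ cosh (π * r) ^ 2 * besselEnergy (2 * r) u := by
        gcongr
        exact (mul_le_mul_of_nonneg_right potential_ge (sq_nonneg _)).trans
          (le_add_of_nonneg_left (by positivity))
    _ ≤ 8 * r := cosh_sq_mul_besselEnergy_le hr hu
    _ ≤ r * 3 ^ 2 := by linarith

lemma cosh_mul_abs_mul_besselMoment_one_le (hr : 1 ≤ r) (hu : 0 < u) (hur : u ≤ 3 / 2 * r) :
    cosh (π * r) * |u * besselMoment (2 * r) 1 u| ≤ 3 * √r := by
  have potential_nonneg : 0 ≤ (2 * r) ^ 2 - u ^ 2 := by nlinarith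
  rw [← abs_of_pos (cosh_pos (π * r)), ← abs_mul]
  refine abs_le_of_sq_le_sq ?_ (by positivity)
  calc (cosh (π * r) * (u * besselMoment (2 * r) 1 u)) ^ 2
      = cosh (π * r) ^ 2 * (u ^ 2 * besselMoment (2 * r) 1 u ^ 2) := by ring
    _ ≤ cosh (π * r) ^ 2 * besselEnergy (2 * r) u := by
        gcongr
        exact le_add_of_nonneg_right (by positivity)
    _ ≤ 8 * r := cosh_sq_mul_besselEnergy_le hr hu
    _ ≤ (3 * √r) ^ 2 := by rw [mul_pow, sq_sqrt (by linarith)]; linarith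

end

/-! ### Variation of piecewise monotone functions -/

section variation

variable {f : ℝ → ℝ} {p q α β D : ℝ}

lemma integral_abs_deriv_of_monotoneOn (hf : ContDiff ℝ 1 f) (hpq : p ≤ q)
    (hmono : MonotoneOn f (Icc p q)) : ∫ t in p..q, |deriv f t| = f q - f p := by
  rcases hpq.eq_or_lt with rfl | hpq
  · simp
  have deriv_nonneg {t : ℝ} (ht : t ∈ Icc p q) : 0 ≤ deriv f t := by
    rw [← (hf.differentiable one_ne_zero t).derivWithin (uniqueDiffOn_Icc hpq t ht)]
    exact hmono.derivWithin_nonneg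
  rw [intervalIntegral.integral_congr (g := deriv f) fun t ht =>
      abs_of_nonneg (deriv_nonneg (uIcc_of_le hpq.le ▸ ht)),
    intervalIntegral.integral_deriv_eq_sub (fun t _ => hf.differentiable one_ne_zero t)
      (hf.continuous_deriv_one.intervalIntegrable p q)]

lemma integral_abs_deriv_le_of_monotoneOn_or_antitoneOn (hf : ContDiff ℝ 1 f) (hpq : p ≤ q)
    (hmono : MonotoneOn f (Icc p q) ∨ AntitoneOn f (Icc p q)) (hp : |f p| ≤ D) (hq : |f q| ≤ D) :
    ∫ t in p..q, |deriv f t| ≤ 2 * D := by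
  have := abs_le.1 hp
  have := abs_le.1 hq
  rcases hmono with hmono | hanti
  · rw [integral_abs_deriv_of_monotoneOn hf hpq hmono]
    linarith
  · have integral_neg_f := integral_abs_deriv_of_monotoneOn hf.neg hpq hanti.neg
    simp only [deriv.fun_neg, abs_neg] at integral_neg_f
    linarith

lemma PiecewiseMono.integral_abs_deriv_le {M : ℕ} (hmono : PiecewiseMono f M) (hM : 0 < M)
    (hf : ContDiff ℝ 1 f) (hD : ∀ t, 0 ≤ t → |f t| ≤ D) (hα : 0 ≤ α) (hαβ : α ≤ β) :
    ∫ t in α..β, |deriv f t| ≤ 2 * M * D := by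
  obtain ⟨m, rfl⟩ := Nat.exists_eq_add_one.2 hM
  obtain ⟨c, hc₀, hc, hpieces, hray⟩ := hmono
  rw [Nat.add_sub_cancel] at hray
  have c_nonneg (i : ℕ) : 0 ≤ c i := hc₀ ▸ hc i.zero_le
  have integrable (s t : ℝ) : IntervalIntegrable (fun t => |deriv f t|) volume s t :=
    hf.continuous_deriv_one.abs.intervalIntegrable s t
  have piece_le (i : ℕ) (hi : i < m) : ∫ t in c i..c (i + 1), |deriv f t| ≤ 2 * D :=
    integral_abs_deriv_le_of_monotoneOn_or_antitoneOn hf (hc i.le_succ)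
      (hpieces i (Nat.succ_lt_succ hi)) (hD _ (c_nonneg _)) (hD _ (c_nonneg _))
  have ray_le : ∫ t in c m..max (c m) β, |deriv f t| ≤ 2 * D :=
    integral_abs_deriv_le_of_monotoneOn_or_antitoneOn hf (le_max_left _ _)
      (hray.imp (·.mono Icc_subset_Ici_self) (·.mono Icc_subset_Ici_self))
      (hD _ (c_nonneg m)) (hD _ ((c_nonneg m).trans (le_max_left _ _)))
  calc ∫ t in α..β, |deriv f t|
      ≤ ∫ t in c 0..max (c m) β, |deriv f t| :=
        intervalIntegral.integral_mono_interval (hc₀ ▸ hα) hαβ (le_max_right _ _)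
          (.of_forall fun t => abs_nonneg _) (integrable _ _)
    _ = (∑ i ∈ Finset.range m, ∫ t in c i..c (i + 1), |deriv f t|) +
          ∫ t in c m..max (c m) β, |deriv f t| := by
        rw [intervalIntegral.sum_integral_adjacent_intervals fun i _ => integrable _ _,
          intervalIntegral.integral_add_adjacent_intervals (integrable _ _) (integrable _ _)]
    _ ≤ m * (2 * D) + 2 * D := by
        gcongr
        simpa using Finset.sum_le_card_nsmul _ _ _ fun i hi => piece_le i (Finset.mem_range.1 hi)
    _ = 2 * (m + 1 : ℕ) * D := by push_cast; ring

lemma integral_abs_le_mul_integral_abs_deriv (hf : ContDiff ℝ 1 f) (hfα : f α = 0) (hαβ : α ≤ β) :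
    ∫ t in α..β, |f t| ≤ (β - α) * ∫ t in α..β, |deriv f t| := by
  have integrable (s t : ℝ) : IntervalIntegrable (deriv f) volume s t :=
    hf.continuous_deriv_one.intervalIntegrable s t
  have abs_f_le {t : ℝ} (ht : t ∈ Icc α β) : |f t| ≤ ∫ s in α..β, |deriv f s| :=
    calc |f t| = |∫ s in α..t, deriv f s| := by
          rw [intervalIntegral.integral_deriv_eq_sub
            (fun s _ => hf.differentiable one_ne_zero s) (integrable _ _), hfα, sub_zero]
      _ ≤ ∫ s in α..t, |deriv f s| := intervalIntegral.abs_integral_le_integral_abs ht.1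
      _ ≤ ∫ s in α..β, |deriv f s| :=
          intervalIntegral.integral_mono_interval le_rfl ht.1 ht.2
            (.of_forall fun s => abs_nonneg _) (integrable _ _).abs
  calc ∫ t in α..β, |f t| ≤ ∫ _ in α..β, ∫ s in α..β, |deriv f s| :=
        intervalIntegral.integral_mono_on hαβ (hf.continuous.abs.intervalIntegrable _ _)
          intervalIntegrable_const fun t ht => abs_f_le ht
    _ = (β - α) * ∫ t in α..β, |deriv f t| := by
        rw [intervalIntegral.integral_const, smul_eq_mul]

end variation

lemma deriv_eq_zero_of_forall_mem_eq_zero {𝕜 E : Type*} [NontriviallyNormedField 𝕜]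
    [NormedAddCommGroup E] [NormedSpace 𝕜 E] {f : 𝕜 → E} {p : 𝕜} {s : Set 𝕜}
    (hf : DifferentiableAt 𝕜 f p) (hs : UniqueDiffWithinAt 𝕜 s p) (hp : p ∈ s)
    (hfs : ∀ t ∈ s, f t = 0) : deriv f p = 0 := by
  rw [← hf.derivWithin hs, derivWithin_congr hfs (hfs p hp), derivWithin_fun_const,
    Pi.zero_apply]

/-! ### Integration by parts against `K_{iν}` -/

section quotDeriv

variable {ν u : ℝ} {φ : ℝ → ℝ}

/-- The derivative of `φ u / (ν² - u²)`, the factor left on the test function after one integration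
by parts. -/
noncomputable def quotDeriv (ν : ℝ) (φ : ℝ → ℝ) (u : ℝ) : ℝ :=
  deriv φ u / (ν ^ 2 - u ^ 2) + 2 * u * φ u / (ν ^ 2 - u ^ 2) ^ 2

/-- The derivative of `u * quotDeriv ν φ u`, the factor left on the test function after two
integrations by parts. -/
noncomputable def mulQuotDerivDeriv (ν : ℝ) (φ : ℝ → ℝ) (u : ℝ) : ℝ :=
  u * deriv (deriv φ) u / (ν ^ 2 - u ^ 2) +
    (ν ^ 2 + 3 * u ^ 2) * deriv φ u / (ν ^ 2 - u ^ 2) ^ 2 +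
    4 * u * (ν ^ 2 + u ^ 2) * φ u / (ν ^ 2 - u ^ 2) ^ 3

lemma sq_sub_sq_pos_of_mem_Ioo (hu : u ∈ Ioo 0 ν) : 0 < ν ^ 2 - u ^ 2 := by
  nlinarith [hu.1, hu.2]

lemma hasDerivAt_div_sq_sub_sq (hφ : DifferentiableAt ℝ φ u) (hu : u ∈ Ioo 0 ν) :
    HasDerivAt (fun u => φ u / (ν ^ 2 - u ^ 2)) (quotDeriv ν φ u) u := by
  have potential_ne := (sq_sub_sq_pos_of_mem_Ioo hu).ne'
  refine (hφ.hasDerivAt.fun_div ((hasDerivAt_pow 2 u).const_sub _) potential_ne).congr_deriv ?_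
  rw [quotDeriv]
  field_simp
  ring

lemma hasDerivAt_mul_quotDeriv (hφ : DifferentiableAt ℝ φ u) (hφ' : DifferentiableAt ℝ (deriv φ) u)
    (hu : u ∈ Ioo 0 ν) :
    HasDerivAt (fun u => u * quotDeriv ν φ u) (mulQuotDerivDeriv ν φ u) u := by
  have potential_ne := (sq_sub_sq_pos_of_mem_Ioo hu).ne'
  have potential_deriv := (hasDerivAt_pow 2 u).const_sub (ν ^ 2)
  refine ((hasDerivAt_id' u).fun_mul ((hφ'.hasDerivAt.fun_div potential_deriv potential_ne).fun_add
    ((((hasDerivAt_id' u).const_mul 2).fun_mul hφ.hasDerivAt).fun_div (potential_deriv.fun_pow 2)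
      (pow_ne_zero 2 potential_ne)))).congr_deriv ?_
  rw [mulQuotDerivDeriv]
  field_simp
  ring

lemma continuousOn_quotDeriv (hφ : ContDiff ℝ 1 φ) : ContinuousOn (quotDeriv ν φ) (Ioo 0 ν) := by
  have := hφ.continuous
  have := hφ.continuous_deriv_one
  have potential_ne : ∀ u ∈ Ioo 0 ν, ν ^ 2 - u ^ 2 ≠ 0 := fun u hu =>
    (sq_sub_sq_pos_of_mem_Ioo hu).ne'
  have potential_pow_ne (k : ℕ) : ∀ u ∈ Ioo 0 ν, (ν ^ 2 - u ^ 2) ^ k ≠ 0 := fun u hu =>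
    pow_ne_zero k (potential_ne u hu)
  unfold quotDeriv
  fun_prop (disch := first | exact potential_ne | exact potential_pow_ne _)

lemma continuousOn_mulQuotDerivDeriv (hφ : ContDiff ℝ 2 φ) :
    ContinuousOn (mulQuotDerivDeriv ν φ) (Ioo 0 ν) := by
  have hφ' : ContDiff ℝ 1 (deriv φ) := hφ.deriv'
  have := hφ.continuous
  have := hφ'.continuous
  have := hφ'.continuous_deriv_one
  have potential_ne : ∀ u ∈ Ioo 0 ν, ν ^ 2 - u ^ 2 ≠ 0 := fun u hu =>
    (sq_sub_sq_pos_of_mem_Ioo hu).ne'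
  have potential_pow_ne (k : ℕ) : ∀ u ∈ Ioo 0 ν, (ν ^ 2 - u ^ 2) ^ k ≠ 0 := fun u hu =>
    pow_ne_zero k (potential_ne u hu)
  unfold mulQuotDerivDeriv
  fun_prop (disch := first | exact potential_ne | exact potential_pow_ne _)

end quotDeriv

section integration_by_parts

variable {ν α β u : ℝ} {φ : ℝ → ℝ}

lemma continuousOn_besselMoment (ν : ℝ) (k : ℕ) : ContinuousOn (besselMoment ν k) (Ioi 0) :=
  fun _ hu => (hasDerivAt_besselMoment ν k hu).continuousAt.continuousWithinAt

lemma hasDerivAt_mul_besselMoment_one (ν : ℝ) (hu : 0 < u) :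
    HasDerivAt (fun u => u * besselMoment ν 1 u) ((ν ^ 2 - u ^ 2) * besselMoment ν 0 u / u) u := by
  refine ((hasDerivAt_id' u).fun_mul (hasDerivAt_besselMoment ν 1 hu)).congr_deriv ?_
  field_simp
  linear_combination -besselMoment_ode ν hu

lemma integral_besselMoment_zero_mul_div (hα : α ∈ Ioo 0 ν) (hβ : β ∈ Ioo 0 ν)
    (hφ : ContDiff ℝ 1 φ) (hφα : φ α = 0) (hφβ : φ β = 0) :
    ∫ u in α..β, besselMoment ν 0 u * φ u / u =
      -∫ u in α..β, quotDeriv ν φ u * (u * besselMoment ν 1 u) := by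
  have uIcc_subset : uIcc α β ⊆ Ioo 0 ν := ordConnected_Ioo.uIcc_subset hα hβ
  have uIcc_subset_Ioi : uIcc α β ⊆ Ioi 0 := fun u hu => (uIcc_subset hu).1
  have besselMoment_cont := (continuousOn_besselMoment ν 0).mono uIcc_subset_Ioi
  have parts := intervalIntegral.integral_mul_deriv_eq_deriv_mul
    (fun u hu => hasDerivAt_div_sq_sub_sq (hφ.differentiable one_ne_zero u) (uIcc_subset hu))
    (fun u hu => hasDerivAt_mul_besselMoment_one ν (uIcc_subset hu).1)
    ((continuousOn_quotDeriv hφ).mono uIcc_subset).intervalIntegrable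
    (ContinuousOn.intervalIntegrable
      (by fun_prop (disch := exact fun u hu => (uIcc_subset hu).1.ne')))
  rw [hφα, hφβ, zero_div, zero_mul, zero_div, zero_mul, sub_zero, zero_sub] at parts
  rw [← parts]
  refine intervalIntegral.integral_congr fun u hu => ?_
  have potential_ne := (sq_sub_sq_pos_of_mem_Ioo (uIcc_subset hu)).ne'
  field_simp

lemma integral_quotDeriv_mul_besselMoment_one (hα : α ∈ Ioo 0 ν) (hβ : β ∈ Ioo 0 ν)
    (hφ : ContDiff ℝ 2 φ) (hφα : φ α = 0) (hφβ : φ β = 0)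
    (hφα' : deriv φ α = 0) (hφβ' : deriv φ β = 0) :
    ∫ u in α..β, quotDeriv ν φ u * (u * besselMoment ν 1 u) =
      ∫ u in α..β, mulQuotDerivDeriv ν φ u * besselMoment ν 0 u := by
  have uIcc_subset : uIcc α β ⊆ Ioo 0 ν := ordConnected_Ioo.uIcc_subset hα hβ
  have uIcc_subset_Ioi : uIcc α β ⊆ Ioi 0 := fun u hu => (uIcc_subset hu).1
  have hφ' : ContDiff ℝ 1 (deriv φ) := hφ.deriv'
  have parts := intervalIntegral.integral_mul_deriv_eq_deriv_mul
    (fun u hu => hasDerivAt_mul_quotDeriv (hφ.differentiable two_ne_zero u)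
      (hφ'.differentiable one_ne_zero u) (uIcc_subset hu))
    (fun u hu => hasDerivAt_besselMoment ν 0 (uIcc_subset hu).1)
    ((continuousOn_mulQuotDerivDeriv hφ).mono uIcc_subset).intervalIntegrable
    ((continuousOn_besselMoment ν 1).mono uIcc_subset_Ioi).neg.intervalIntegrable
  simp only [quotDeriv, hφα, hφβ, hφα', hφβ', zero_div, mul_zero, add_zero, zero_mul, sub_zero,
    zero_sub, zero_add, mul_neg, intervalIntegral.integral_neg, neg_inj] at parts
  simpa only [quotDeriv, mul_left_comm, mul_assoc] using parts

end integration_by_parts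

/-! ### Bounds for the transform -/

section quotDeriv_bounds

variable {r u β : ℝ} {φ : ℝ → ℝ}

lemma abs_quotDeriv_le (hr : 0 < r) (hu : 0 < u) (hur : u ≤ 3 / 2 * r) :
    |quotDeriv (2 * r) φ u| ≤ |deriv φ u| / r ^ 2 + |φ u| / r ^ 3 := by
  have potential_ge : 7 / 4 * r ^ 2 ≤ (2 * r) ^ 2 - u ^ 2 := by nlinarith
  have potential_pos : 0 < (2 * r) ^ 2 - u ^ 2 := by nlinarith [pow_pos hr 2]
  calc |quotDeriv (2 * r) φ u|
      ≤ |deriv φ u| / ((2 * r) ^ 2 - u ^ 2) + 2 * u * |φ u| / ((2 * r) ^ 2 - u ^ 2) ^ 2 := by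
        refine (abs_add_le _ _).trans_eq ?_
        simp only [abs_div, abs_mul, abs_pow, abs_of_pos potential_pos, abs_of_pos hu,
          Nat.abs_ofNat]
    _ ≤ |deriv φ u| / (7 / 4 * r ^ 2) + 2 * (3 / 2 * r) * |φ u| / (7 / 4 * r ^ 2) ^ 2 := by
        gcongr
    _ = 4 / 7 * (|deriv φ u| / r ^ 2) + 48 / 49 * (|φ u| / r ^ 3) := by field_simp; ring
    _ ≤ |deriv φ u| / r ^ 2 + |φ u| / r ^ 3 := by
        gcongr <;> exact mul_le_of_le_one_left (by positivity) (by norm_num)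

lemma abs_mulQuotDerivDeriv_le (hr : 0 < r) (hu : 0 < u) (huβ : u ≤ β) (hβ : β ≤ 3 / 2 * r) :
    |mulQuotDerivDeriv (2 * r) φ u| ≤
      (β * |deriv (deriv φ) u| + 4 * |deriv φ u|) / r ^ 2 + 7 * |φ u| / r ^ 3 := by
  have hur : u ≤ 3 / 2 * r := huβ.trans hβ
  have hβ₀ : 0 < β := hu.trans_le huβ
  have potential_ge : 7 / 4 * r ^ 2 ≤ (2 * r) ^ 2 - u ^ 2 := by nlinarith
  have potential_pos : 0 < (2 * r) ^ 2 - u ^ 2 := by nlinarith [pow_pos hr 2]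
  calc |mulQuotDerivDeriv (2 * r) φ u|
      ≤ u * |deriv (deriv φ) u| / ((2 * r) ^ 2 - u ^ 2) +
          ((2 * r) ^ 2 + 3 * u ^ 2) * |deriv φ u| / ((2 * r) ^ 2 - u ^ 2) ^ 2 +
          4 * u * ((2 * r) ^ 2 + u ^ 2) * |φ u| / ((2 * r) ^ 2 - u ^ 2) ^ 3 := by
        refine (abs_add_three _ _ _).trans_eq ?_
        have : 0 < (2 * r) ^ 2 + 3 * u ^ 2 := by positivity
        have : 0 < (2 * r) ^ 2 + u ^ 2 := by positivity
        simp only [abs_div, abs_mul, abs_pow, abs_of_pos, Nat.abs_ofNat, *]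
    _ ≤ β * |deriv (deriv φ) u| / (7 / 4 * r ^ 2) +
          ((2 * r) ^ 2 + 3 * (3 / 2 * r) ^ 2) * |deriv φ u| / (7 / 4 * r ^ 2) ^ 2 +
          4 * (3 / 2 * r) * ((2 * r) ^ 2 + (3 / 2 * r) ^ 2) * |φ u| / (7 / 4 * r ^ 2) ^ 3 := by
        gcongr
    _ = (4 / 7 * (β * |deriv (deriv φ) u|) + 172 / 49 * |deriv φ u|) / r ^ 2 +
          2400 / 343 * |φ u| / r ^ 3 := by
        field_simp; ring
    _ ≤ (β * |deriv (deriv φ) u| + 4 * |deriv φ u|) / r ^ 2 + 7 * |φ u| / r ^ 3 := by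
        have := mul_nonneg hβ₀.le (abs_nonneg (deriv (deriv φ) u))
        gcongr ?_ / _ + ?_ / _ <;> linarith [abs_nonneg (deriv φ u), abs_nonneg (φ u)]

end quotDeriv_bounds

section phiCheck

variable {r α β : ℝ} {φ : ℝ → ℝ}

lemma Icc_subset_Ioo_two_mul (hα : 0 < α) (hβ : β ≤ 3 / 2 * r) : Icc α β ⊆ Ioo 0 (2 * r) :=
  fun u hu => ⟨hα.trans_le hu.1, by linarith [hu.1, hu.2]⟩

lemma phiCheck_eq_intervalIntegral (hα : 0 < α) (hαβ : α ≤ β) (hφα : ∀ t ≤ α, φ t = 0)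
    (hφβ : ∀ t, β ≤ t → φ t = 0) :
    phiCheck φ r = cosh (π * r) * ∫ u in α..β, besselMoment (2 * r) 0 u * φ u / u := by
  have vanish : ∀ u ∈ Ioi 0 \ Ioc α β, KBessel (2 * r) u * φ u / u = 0 := fun u hu => by
    have : φ u = 0 := (le_or_gt u α).elim (hφα u) fun hαu =>
      hφβ u (not_lt.1 fun huβ => hu.2 ⟨hαu, huβ.le⟩)
    rw [this, mul_zero, zero_div]
  rw [phiCheck, setIntegral_eq_of_subset_of_forall_sdiff_eq_zero measurableSet_Ioi
    (fun u hu => hα.trans hu.1) vanish, intervalIntegral.integral_of_le hαβ]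
  simp only [KBessel_eq_besselMoment_zero]

lemma mul_abs_integral_mul_le {g h : ℝ → ℝ} {c B : ℝ} (hc : 0 ≤ c) (hαβ : α ≤ β)
    (hg : ContinuousOn g (Icc α β)) (hB : ∀ u ∈ Icc α β, c * |h u| ≤ B) :
    c * |∫ u in α..β, g u * h u| ≤ B * ∫ u in α..β, |g u| := by
  have hg' : IntervalIntegrable (fun u => |g u|) volume α β :=
    hg.abs.intervalIntegrable_of_Icc hαβ
  rw [← abs_of_nonneg hc, ← abs_mul, ← intervalIntegral.integral_const_mul,
    ← intervalIntegral.integral_const_mul, ← norm_eq_abs]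
  refine intervalIntegral.norm_integral_le_of_norm_le hαβ (ae_of_all _ fun u hu => ?_)
    (hg'.const_mul B)
  rw [norm_eq_abs, abs_mul, abs_mul, abs_of_nonneg hc, mul_left_comm, mul_comm B]
  gcongr
  exact hB u (Ioc_subset_Icc_self hu)

lemma sqrt_div_sq_eq_rpow (hr : 0 < r) : √r / r ^ 2 = r ^ (-(3 : ℝ) / 2) := by
  rw [sqrt_eq_rpow, ← rpow_natCast, ← rpow_sub hr]
  norm_num

lemma inv_sqrt_div_sq_eq_rpow (hr : 0 < r) : 1 / √r / r ^ 2 = r ^ (-(5 : ℝ) / 2) := by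
  rw [sqrt_eq_rpow, one_div, ← rpow_neg hr.le, ← rpow_natCast, ← rpow_sub hr]
  norm_num

lemma integral_abs_quotDeriv_le (hr : 0 < r) (hα : 0 < α) (hαβ : α ≤ β) (hβ : β ≤ 3 / 2 * r)
    (hφ : ContDiff ℝ 1 φ) (hφα : φ α = 0) :
    ∫ u in α..β, |quotDeriv (2 * r) φ u| ≤ 3 * (∫ u in α..β, |deriv φ u|) / r ^ 2 := by
  set V := ∫ u in α..β, |deriv φ u|
  have V_nonneg : 0 ≤ V := intervalIntegral.integral_nonneg hαβ fun u _ => abs_nonneg _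
  have hφc : IntervalIntegrable (|φ ·|) volume α β := hφ.continuous.abs.intervalIntegrable _ _
  have hφ' : IntervalIntegrable (|deriv φ ·|) volume α β :=
    hφ.continuous_deriv_one.abs.intervalIntegrable _ _
  have quotDeriv_cont := (continuousOn_quotDeriv hφ).mono (Icc_subset_Ioo_two_mul hα hβ)
  calc ∫ u in α..β, |quotDeriv (2 * r) φ u|
      ≤ ∫ u in α..β, (|deriv φ u| / r ^ 2 + |φ u| / r ^ 3) :=
        intervalIntegral.integral_mono_on hαβ (quotDeriv_cont.abs.intervalIntegrable_of_Icc hαβ)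
          ((hφ'.div_const _).add (hφc.div_const _)) fun u hu =>
            abs_quotDeriv_le hr (hα.trans_le hu.1) (hu.2.trans hβ)
    _ = V / r ^ 2 + (∫ u in α..β, |φ u|) / r ^ 3 := by
        rw [intervalIntegral.integral_add (hφ'.div_const _) (hφc.div_const _),
          intervalIntegral.integral_div, intervalIntegral.integral_div]
    _ ≤ V / r ^ 2 + 3 / 2 * r * V / r ^ 3 := by
        gcongr
        exact (integral_abs_le_mul_integral_abs_deriv hφ hφα hαβ).trans
          (mul_le_mul_of_nonneg_right (by linarith) V_nonneg)
    _ = 5 / 2 * V / r ^ 2 := by field_simp; ring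
    _ ≤ 3 * V / r ^ 2 := by gcongr; norm_num

lemma integral_abs_mulQuotDerivDeriv_le (hr : 0 < r) (hα : 0 < α) (hαβ : α ≤ β)
    (hβ : β ≤ 3 / 2 * r) (hφ : ContDiff ℝ 2 φ) (hφα : φ α = 0) (hφα' : deriv φ α = 0) :
    ∫ u in α..β, |mulQuotDerivDeriv (2 * r) φ u| ≤
      16 * (β * ∫ u in α..β, |deriv (deriv φ) u|) / r ^ 2 := by
  set W := ∫ u in α..β, |deriv (deriv φ) u|
  have hφ₁ : ContDiff ℝ 1 (deriv φ) := hφ.deriv'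
  have W_nonneg : 0 ≤ W := intervalIntegral.integral_nonneg hαβ fun u _ => abs_nonneg _
  have integral_abs_deriv_le : ∫ u in α..β, |deriv φ u| ≤ β * W :=
    (integral_abs_le_mul_integral_abs_deriv hφ₁ hφα' hαβ).trans
      (mul_le_mul_of_nonneg_right (by linarith) W_nonneg)
  have integral_abs_le : ∫ u in α..β, |φ u| ≤ 3 / 2 * r * (β * W) :=
    (integral_abs_le_mul_integral_abs_deriv (hφ.of_le one_le_two) hφα hαβ).trans
      (mul_le_mul (by linarith) integral_abs_deriv_le
        (intervalIntegral.integral_nonneg hαβ fun u _ => abs_nonneg _) (by positivity))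
  have hφc : IntervalIntegrable (|φ ·|) volume α β := hφ.continuous.abs.intervalIntegrable _ _
  have hφ' : IntervalIntegrable (|deriv φ ·|) volume α β :=
    hφ₁.continuous.abs.intervalIntegrable _ _
  have hφ'' : IntervalIntegrable (|deriv (deriv φ) ·|) volume α β :=
    hφ₁.continuous_deriv_one.abs.intervalIntegrable _ _
  have derivs := (hφ''.const_mul β).add (hφ'.const_mul 4)
  have mulQuotDerivDeriv_cont :=
    (continuousOn_mulQuotDerivDeriv hφ).mono (Icc_subset_Ioo_two_mul hα hβ)
  calc ∫ u in α..β, |mulQuotDerivDeriv (2 * r) φ u|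
      ≤ ∫ u in α..β,
          ((β * |deriv (deriv φ) u| + 4 * |deriv φ u|) / r ^ 2 + 7 * |φ u| / r ^ 3) :=
        intervalIntegral.integral_mono_on hαβ
          (mulQuotDerivDeriv_cont.abs.intervalIntegrable_of_Icc hαβ)
          ((derivs.div_const _).add ((hφc.const_mul 7).div_const _)) fun u hu =>
            abs_mulQuotDerivDeriv_le hr (hα.trans_le hu.1) hu.2 hβ
    _ = (β * W + 4 * ∫ u in α..β, |deriv φ u|) / r ^ 2 + 7 * (∫ u in α..β, |φ u|) / r ^ 3 := by
        rw [intervalIntegral.integral_add (derivs.div_const _) ((hφc.const_mul 7).div_const _),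
          intervalIntegral.integral_div, intervalIntegral.integral_div,
          intervalIntegral.integral_add (hφ''.const_mul β) (hφ'.const_mul 4)]
        simp only [intervalIntegral.integral_const_mul, W]
    _ ≤ (β * W + 4 * (β * W)) / r ^ 2 + 7 * (3 / 2 * r * (β * W)) / r ^ 3 := by gcongr
    _ = 31 / 2 * (β * W) / r ^ 2 := by field_simp; ring
    _ ≤ 16 * (β * W) / r ^ 2 := by
        have := mul_nonneg (hα.le.trans hαβ) W_nonneg
        gcongr
        norm_num

lemma abs_phiCheck_le_integral_abs_deriv (hr : 1 ≤ r) (hα : 0 < α) (hαβ : α ≤ β)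
    (hβ : β ≤ 3 / 2 * r) (hφ : ContDiff ℝ 1 φ) (hφα : ∀ t ≤ α, φ t = 0)
    (hφβ : ∀ t, β ≤ t → φ t = 0) :
    |phiCheck φ r| ≤ 9 * r ^ (-(3 : ℝ) / 2) * ∫ u in α..β, |deriv φ u| := by
  have hr₀ : 0 < r := by linarith
  have Icc_subset := Icc_subset_Ioo_two_mul hα hβ
  calc |phiCheck φ r|
      = cosh (π * r) * |∫ u in α..β, quotDeriv (2 * r) φ u * (u * besselMoment (2 * r) 1 u)| := by
        rw [phiCheck_eq_intervalIntegral hα hαβ hφα hφβ, integral_besselMoment_zero_mul_div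
          (Icc_subset (left_mem_Icc.2 hαβ)) (Icc_subset (right_mem_Icc.2 hαβ)) hφ
          (hφα α le_rfl) (hφβ β le_rfl), abs_mul, abs_neg, abs_of_pos (cosh_pos _)]
    _ ≤ 3 * √r * ∫ u in α..β, |quotDeriv (2 * r) φ u| :=
        mul_abs_integral_mul_le (cosh_pos _).le hαβ
          ((continuousOn_quotDeriv hφ).mono Icc_subset) fun u hu =>
            cosh_mul_abs_mul_besselMoment_one_le hr (Icc_subset hu).1 (hu.2.trans hβ)
    _ ≤ 3 * √r * (3 * (∫ u in α..β, |deriv φ u|) / r ^ 2) := by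
        gcongr
        exact integral_abs_quotDeriv_le hr₀ hα hαβ hβ hφ (hφα α le_rfl)
    _ = 9 * r ^ (-(3 : ℝ) / 2) * ∫ u in α..β, |deriv φ u| := by rw [← sqrt_div_sq_eq_rpow hr₀]; ring

lemma abs_phiCheck_le_integral_abs_deriv_deriv (hr : 1 ≤ r) (hα : 0 < α) (hαβ : α ≤ β)
    (hβ : β ≤ 3 / 2 * r) (hφ : ContDiff ℝ 2 φ) (hφα : ∀ t ≤ α, φ t = 0)
    (hφβ : ∀ t, β ≤ t → φ t = 0) :
    |phiCheck φ r| ≤ 48 * r ^ (-(5 : ℝ) / 2) * (β * ∫ u in α..β, |deriv (deriv φ) u|) := by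
  have hr₀ : 0 < r := by linarith
  have Icc_subset := Icc_subset_Ioo_two_mul hα hβ
  have hφα' := deriv_eq_zero_of_forall_mem_eq_zero (hφ.differentiable two_ne_zero α)
    (uniqueDiffOn_Iic α α self_mem_Iic) self_mem_Iic hφα
  have hφβ' := deriv_eq_zero_of_forall_mem_eq_zero (hφ.differentiable two_ne_zero β)
    (uniqueDiffOn_Ici β β self_mem_Ici) self_mem_Ici hφβ
  have hα_mem := Icc_subset (left_mem_Icc.2 hαβ)
  have hβ_mem := Icc_subset (right_mem_Icc.2 hαβ)
  calc |phiCheck φ r|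
      = cosh (π * r) * |∫ u in α..β, mulQuotDerivDeriv (2 * r) φ u * besselMoment (2 * r) 0 u| := by
        rw [phiCheck_eq_intervalIntegral hα hαβ hφα hφβ,
          integral_besselMoment_zero_mul_div hα_mem hβ_mem (hφ.of_le one_le_two)
            (hφα α le_rfl) (hφβ β le_rfl),
          integral_quotDeriv_mul_besselMoment_one hα_mem hβ_mem hφ (hφα α le_rfl) (hφβ β le_rfl)
            hφα' hφβ', abs_mul, abs_neg, abs_of_pos (cosh_pos _)]
    _ ≤ 3 / √r * ∫ u in α..β, |mulQuotDerivDeriv (2 * r) φ u| :=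
        mul_abs_integral_mul_le (cosh_pos _).le hαβ
          ((continuousOn_mulQuotDerivDeriv hφ).mono Icc_subset) fun u hu =>
            cosh_mul_abs_besselMoment_zero_le hr (Icc_subset hu).1 (hu.2.trans hβ)
    _ ≤ 3 / √r * (16 * (β * ∫ u in α..β, |deriv (deriv φ) u|) / r ^ 2) := by
        gcongr
        exact integral_abs_mulQuotDerivDeriv_le hr₀ hα hαβ hβ hφ (hφα α le_rfl) hφα'
    _ = 48 * r ^ (-(5 : ℝ) / 2) * (β * ∫ u in α..β, |deriv (deriv φ) u|) := by
        rw [← inv_sqrt_div_sq_eq_rpow hr₀]; ring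

end phiCheck

theorem statement15_general {a x T C₀ r : ℝ} {M : ℕ} {φ : ℝ → ℝ} (hM : 0 < M) (ha : 0 < a)
    (hx : 0 < x) (hT : 0 < T) (hTx : T ≤ x / 3) (hφ : ContDiff ℝ 2 φ)
    (hφ_le : ∀ t, 0 ≤ t → |φ t| ≤ 1) (hφα : ∀ t, t ≤ a / (2 * x + 2 * T) → φ t = 0)
    (hφβ : ∀ t, a / (x - T) ≤ t → φ t = 0)
    (hφ' : ∀ t, 0 ≤ t → |deriv φ t| ≤ C₀ * x ^ 2 / (a * T))
    (hmono : PiecewiseMono φ M) (hmono' : PiecewiseMono (deriv φ) M) (hr : max (a / x) 1 ≤ r) :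
    |phiCheck φ r| ≤
      M * (18 + 144 * C₀) * min (r ^ (-(3 : ℝ) / 2)) (r ^ (-(5 : ℝ) / 2) * x / T) := by
  obtain ⟨har, hr₁⟩ := max_le_iff.1 hr
  set α := a / (2 * x + 2 * T)
  set β := a / (x - T)
  have hα : 0 < α := by positivity
  have hαβ : α ≤ β := div_le_div_of_nonneg_left ha.le (by linarith) (by linarith)
  have hβ_le : β ≤ 3 / 2 * (a / x) :=
    calc β ≤ a / (2 / 3 * x) := div_le_div_of_nonneg_left ha.le (by positivity) (by linarith)
      _ = 3 / 2 * (a / x) := by field_simp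
  have hC₀ : 0 ≤ C₀ := by
    have := (abs_nonneg _).trans (hφ' 0 le_rfl)
    rw [mul_div_assoc] at this
    exact nonneg_of_mul_nonneg_left this (by positivity)
  have variation_le := hmono.integral_abs_deriv_le hM (hφ.of_le one_le_two) hφ_le hα.le hαβ
  have variation_deriv_nonneg : 0 ≤ ∫ t in α..β, |deriv (deriv φ) t| :=
    intervalIntegral.integral_nonneg hαβ fun t _ => abs_nonneg _
  have variation_deriv_le := hmono'.integral_abs_deriv_le hM hφ.deriv' hφ' hα.le hαβ
  rw [mul_min_of_nonneg _ _ (by positivity)]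
  refine le_min ?_ ?_
  · calc |phiCheck φ r| ≤ 9 * r ^ (-(3 : ℝ) / 2) * (2 * M * 1) :=
          (abs_phiCheck_le_integral_abs_deriv hr₁ hα hαβ (by linarith) (hφ.of_le one_le_two)
            hφα hφβ).trans (by gcongr)
      _ = M * 18 * r ^ (-(3 : ℝ) / 2) := by ring
      _ ≤ M * (18 + 144 * C₀) * r ^ (-(3 : ℝ) / 2) := by gcongr; linarith
  · calc |phiCheck φ r|
        ≤ 48 * r ^ (-(5 : ℝ) / 2) * (3 / 2 * (a / x) * (2 * M * (C₀ * x ^ 2 / (a * T)))) :=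
          (abs_phiCheck_le_integral_abs_deriv_deriv hr₁ hα hαβ (by linarith) hφ hφα hφβ).trans
            (by gcongr)
      _ = M * (144 * C₀) * (r ^ (-(5 : ℝ) / 2) * x / T) := by field_simp; ring
      _ ≤ M * (18 + 144 * C₀) * (r ^ (-(5 : ℝ) / 2) * x / T) := by gcongr; linarith

theorem statement15 :
    ∀ C₀ : ℝ, 0 < C₀ → ∀ M : ℕ, 0 < M →
      ∃ C : ℝ, 0 < C ∧
        ∀ a x T : ℝ, 0 < a → 0 < x → 0 < T → T ≤ x / 3 →
          ∀ φ : ℝ → ℝ, IsAdmissible a x T C₀ M φ →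
            ∀ r : ℝ, max (a / x) 1 ≤ r →
              |phiCheck φ r| ≤ C * min (r ^ (-(3:ℝ)/2)) (r ^ (-(5:ℝ)/2) * x / T) := by
  refine fun C₀ hC₀ M hM => ⟨M * (18 + 144 * C₀), by positivity, ?_⟩
  rintro a x T ha hx hT hTx φ ⟨hφ, hφ_range, -, hφα, hφβ, hφ', hmono, hmono'⟩ r hr
  exact statement15_general hM ha hx hT hTx (hφ.of_le (by norm_cast))
    (fun t _ => abs_le.2 ⟨by linarith [hφ_range t], (hφ_range t).2⟩) hφα hφβ hφ' hmono hmono' hr
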